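/- Consider the moment problem (P): minimize over finite signed regular Borel measures μ on Ω the quantity E_μ^Ω[min_{k=1,…,r} max_{ℓ=1,…,L} g_ℓ^k(ω)] subject to E_μ^Ω[h_j(ω)] ≤ γ_j for j=1,…,J, E_μ^Ω[1] = 1, and μ ⪰_B 0, where Ω ⊂ ℝ^m is a projected spectrahedron given by matrices F_0,…,F_m, M_1,…,M_N, the g_ℓ^k and h_j are SOS-convex polynomials, and γ_j ∈ ℝ. Consider also the SOS optimization problem (D): maximize −Σ_{j=1}^J λ_j γ_j − λ_{J+1} over λ ∈ ℝ_+^J × ℝ, positive semi-definite ν×ν matrices Z_k, and δ^k ∈ Δ for k=1,…,r, subject to: Σ_{ℓ=1}^L δ_ℓ^k g_ℓ^k(v) + Σ_{j=1}^J λ_j h_j(v) + λ_{J+1} − tr(Z_k F_0) − Σ_{i=1}^m v_i tr(Z_k F_i) ∈ Σ_d^2(v) for each k, and tr(Z_k M_t) = 0 for all t=1,…,N and k=1,…,r, where d is the smallest even integer with d ≥ max{max_{k,ℓ} deg g_ℓ^k, max_j deg h_j}. Assume: (a) problem (P) admits a minimizer; (b) the interior point condition (γ_1,…,γ_J,1)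 ∈ int{{(⟨h_1,μ⟩,…,⟨h_J,μ⟩,⟨1,μ⟩) : μ ∈ X, μ ⪰_B 0} + ℝ_+^J × {0}} holds; (c) Ω is compact and there exist v̄, ξ̄ with F_0 + Σ_i v̄_i F_i + Σ_t ξ̄_t M_t ≻ 0. Then min(P) = max(D). -/

import Mathlib

open MvPolynomial Matrix MeasureTheory
open scoped BigOperators

noncomputable section

def IsSOS {m : ℕ} (p : MvPolynomial (Fin m) ℝ) : Prop :=
  ∃ (J : ℕ) (f : Fin J → MvPolynomial (Fin m) ℝ), p = ∑ j, (f j) ^ 2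

def IsSOSDeg {m : ℕ} (d : ℕ) (p : MvPolynomial (Fin m) ℝ) : Prop :=
  IsSOS p ∧ p.totalDegree ≤ d

def polyHessian {m : ℕ} (f : MvPolynomial (Fin m) ℝ) :
    Matrix (Fin m) (Fin m) (MvPolynomial (Fin m) ℝ) :=
  Matrix.of fun i j => pderiv i (pderiv j f)

def IsSOSConvex {m : ℕ} (f : MvPolynomial (Fin m) ℝ) : Prop :=
  ∃ (s : ℕ) (P : Matrix (Fin s) (Fin m) (MvPolynomial (Fin m) ℝ)),
    polyHessian f = Pᵀ * P

def projSpec {m N ν : ℕ} (F0 : Matrix (Fin ν) (Fin ν) ℝ)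
    (F : Fin m → Matrix (Fin ν) (Fin ν) ℝ)
    (M : Fin N → Matrix (Fin ν) (Fin ν) ℝ) : Set (Fin m → ℝ) :=
  {v | ∃ ξ : Fin N → ℝ, (F0 + ∑ i, v i • F i + ∑ t, ξ t • M t).PosSemidef}

def pwMinMax {m r L : ℕ} [NeZero r] [NeZero L]
    (g : Fin r → Fin L → MvPolynomial (Fin m) ℝ) (v : Fin m → ℝ) : ℝ :=
  Finset.univ.inf' Finset.univ_nonempty fun k =>
    Finset.univ.sup' Finset.univ_nonempty fun ℓ => eval v (g k ℓ)

/-!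
The interior point condition gives the value function of the moment problem a supporting hyperplane
at `γ`, that is, multipliers `λ ≥ 0` and `λ_{J+1}` such that
`min_k max_ℓ g_ℓ^k + ∑ λ_j h_j + λ_{J+1}` is nonnegative on `Ω`, with dual value equal to the
optimal value. For each piece `k`, Lagrangian duality for convex functions over the strictly
feasible linear matrix inequality then turns the pointwise maximum over `ℓ` into weights `δ^k` and
the constraint into a matrix `Z_k`, so that the certificate polynomial of the piece is nonnegative
on all of `ℝ^m`. It is SOS-convex, and a nonnegative SOS-convex polynomial `f` is a sum of squares:
it has a minimizer `a`, because it is constant along every line on a ray of which it is bounded, and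
`f(x) - f(a) = ∫₀¹ (1 - s) (x - a)ᵀ H(a + s (x - a)) (x - a) ds` is a sum of squares in `x` since
the moment matrices of `(1 - s) ds` on `[0, 1]` are positive semidefinite.
-/

theorem isSOS_iff_isSumSq {m : ℕ} {p : MvPolynomial (Fin m) ℝ} : IsSOS p ↔ IsSumSq p := by
  refine ⟨?_, fun hp => ?_⟩
  · rintro ⟨J, f, rfl⟩
    exact IsSumSq.sum_sq _ f
  · induction hp with
    | zero => exact ⟨0, 0, by simp⟩
    | sq_add a _ ih =>
      obtain ⟨J, f, rfl⟩ := ih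
      exact ⟨J + 1, Fin.cons a f, by simp [Fin.sum_univ_succ, sq]⟩

theorem IsSOS.eval_nonneg {m : ℕ} {p : MvPolynomial (Fin m) ℝ} (hp : IsSOS p) (x : Fin m → ℝ) :
    0 ≤ eval x p := by
  obtain ⟨J, f, rfl⟩ := hp
  simpa only [map_sum, map_pow] using Finset.sum_nonneg fun j _ => sq_nonneg (eval x (f j))

theorem isSumSq_C {σ : Type*} {c : ℝ} (hc : 0 ≤ c) : IsSumSq (C c : MvPolynomial σ ℝ) := by
  rw [← Real.mul_self_sqrt hc, map_mul]
  exact IsSumSq.mul_self _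

section TaylorRemainder

variable {R : Type*} [CommRing R] [Algebra ℝ R]

theorem isSumSq_sum_smul_mul {n : Type*} [Fintype n] {A : Matrix n n ℝ} (hA : A.PosSemidef)
    (q : n → R) : IsSumSq (∑ k, ∑ l, A k l • (q k * q l)) := by
  obtain ⟨N, v, rfl⟩ := Matrix.posSemidef_iff_eq_sum_vecMulVec.1 hA
  have hsq : ∑ k, ∑ l, (∑ i, vecMulVec (v i) (star (v i))) k l • (q k * q l)
      = ∑ i, (∑ k, v i k • q k) ^ 2 := by
    simp only [Matrix.sum_apply, Finset.sum_smul, vecMulVec_apply, star_trivial, sq,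
      Finset.sum_mul_sum, smul_mul_smul_comm]
    exact Finset.sum_comm_cycle
  rw [hsq]
  exact IsSumSq.sum_sq _ _

/-- The `R`-valued functional `q ↦ ∫₀¹ (1 - s) q(s) ds` on `R[X]`, which produces second-order
Taylor remainders. Since `R` is only an algebra over `ℝ`, the integral is encoded by its values
`1 / ((k + 1) (k + 2))` on the monomials `X ^ k`. -/
def taylorIntegral : Polynomial R →ₗ[ℝ] R :=
  Polynomial.lsum fun k => (((k + 1 : ℝ) * (k + 2))⁻¹) • LinearMap.id

theorem taylorIntegral_monomial (k : ℕ) (r : R) :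
    taylorIntegral (Polynomial.monomial k r) = ((k + 1 : ℝ) * (k + 2))⁻¹ • r := by
  simp [taylorIntegral, Polynomial.lsum_apply, Polynomial.sum_monomial_index]

theorem taylorIntegral_derivative_derivative (g : Polynomial R) :
    taylorIntegral (Polynomial.derivative (Polynomial.derivative g)) =
      g.eval 1 - g.eval 0 - (Polynomial.derivative g).eval 0 := by
  induction g using Polynomial.induction_on' with
  | add p q hp hq => simp only [map_add, hp, hq, Polynomial.eval_add]; ring
  | monomial n a =>
    rcases n with _ | _ | n
    · simp
    · simp
    · have hn : ((n + 1 : ℝ) * (n + 2))⁻¹ * ((n + 2) * (n + 1)) = 1 := by field_simp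
      have ha : a * (((n + 2 : ℕ) : R) * ((n + 1 : ℕ) : R)) =
          ((n + 2 : ℝ) * (n + 1)) • a := by
        simp [Algebra.smul_def, mul_comm, map_ofNat (algebraMap ℝ R) 2]
      simp only [Polynomial.derivative_monomial, Nat.add_sub_cancel, taylorIntegral_monomial,
        mul_assoc, Polynomial.eval_monomial]
      rw [ha, smul_smul, hn]
      simp

theorem taylorIntegral_eq_integral (q : Polynomial ℝ) :
    taylorIntegral q = ∫ s in (0 : ℝ)..1, (1 - s) * q.eval s := by
  induction q using Polynomial.induction_on' with
  | add p q hp hq =>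
    simp only [map_add, hp, hq, Polynomial.eval_add, mul_add]
    rw [intervalIntegral.integral_add] <;>
      exact (by fun_prop : Continuous _).intervalIntegrable _ _
  | monomial n a =>
    have hpow : ∀ s : ℝ, (1 - s) * (a * s ^ n) = a * (s ^ n - s ^ (n + 1)) := fun s => by ring
    simp only [taylorIntegral_monomial, Polynomial.eval_monomial, hpow, smul_eq_mul]
    rw [intervalIntegral.integral_const_mul, intervalIntegral.integral_sub
      (intervalIntegral.intervalIntegrable_pow n) (intervalIntegral.intervalIntegrable_pow _),
      integral_pow, integral_pow, one_pow, one_pow, zero_pow n.succ_ne_zero,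
      zero_pow (n + 1).succ_ne_zero]
    push_cast
    field_simp
    ring

theorem taylorIntegral_nonneg {q : Polynomial ℝ} (hq : ∀ s, 0 ≤ q.eval s) :
    0 ≤ taylorIntegral q := by
  rw [taylorIntegral_eq_integral]
  exact intervalIntegral.integral_nonneg zero_le_one fun s hs =>
    mul_nonneg (sub_nonneg.2 hs.2) (hq s)

theorem posSemidef_taylorIntegral_X_pow (n : ℕ) :
    (Matrix.of fun k l : Fin n =>
      taylorIntegral (Polynomial.X ^ (k + l : ℕ) : Polynomial ℝ)).PosSemidef := by
  refine .of_dotProduct_mulVec_nonneg (Matrix.ext fun k l => by simp [add_comm]) fun x => ?_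
  have hform : star x ⬝ᵥ (Matrix.of fun k l : Fin n =>
      taylorIntegral (Polynomial.X ^ (k + l : ℕ) : Polynomial ℝ)) *ᵥ x =
      taylorIntegral ((∑ k, x k • Polynomial.X ^ (k : ℕ)) ^ 2) := by
    simp only [sq, Finset.sum_mul_sum, smul_mul_smul_comm, ← pow_add, map_sum, map_smul]
    simp only [dotProduct, mulVec, Finset.mul_sum, of_apply, star_trivial, smul_eq_mul]
    exact Finset.sum_congr rfl fun k _ => Finset.sum_congr rfl fun l _ => by ring
  rw [hform]
  exact taylorIntegral_nonneg fun s => by simpa only [Polynomial.eval_pow] using sq_nonneg _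

theorem isSumSq_taylorIntegral {Q : Polynomial R} (hQ : IsSumSq Q) :
    IsSumSq (taylorIntegral Q) := by
  induction hQ with
  | zero => simpa only [map_zero] using IsSumSq.zero
  | @sq_add q Q _ ih =>
    rw [map_add]
    refine IsSumSq.add ?_ ih
    have hmul : taylorIntegral (q * q) = ∑ k : Fin (q.natDegree + 1), ∑ l : Fin (q.natDegree + 1),
        taylorIntegral (Polynomial.X ^ (k + l : ℕ) : Polynomial ℝ) • (q.coeff k * q.coeff l) := by
      conv_lhs => rw [q.as_sum_range, ← Fin.sum_univ_eq_sum_range fun k =>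
        Polynomial.monomial k (q.coeff k)]
      simp only [Finset.sum_mul_sum, Polynomial.monomial_mul_monomial, map_sum,
        taylorIntegral_monomial, Polynomial.X_pow_eq_monomial, smul_eq_mul, mul_one]
    rw [hmul]
    exact isSumSq_sum_smul_mul (posSemidef_taylorIntegral_X_pow _) _

end TaylorRemainder

section LineRestriction

variable {σ R : Type*} [CommRing R] [Algebra ℝ R]

/-- The restriction `s ↦ f (a + s w)` of a polynomial `f` to the line through `a` in direction `w`,
where `a` and `w` may have coordinates in any `ℝ`-algebra. -/
def lineRestrict (a w : σ → R) : MvPolynomial σ ℝ →ₐ[ℝ] Polynomial R :=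
  aeval fun i => Polynomial.C (a i) + Polynomial.X * Polynomial.C (w i)

theorem eval_lineRestrict (a w : σ → R) (f : MvPolynomial σ ℝ) (s : R) :
    (lineRestrict a w f).eval s = aeval (a + s • w) f := by
  induction f using MvPolynomial.induction_on with
  | C c => simp [lineRestrict, Polynomial.algebraMap_apply]
  | add p q hp hq => simp only [map_add, Polynomial.eval_add, hp, hq]
  | mul_X p i hp =>
    rw [map_mul, map_mul, Polynomial.eval_mul, hp]
    simp [lineRestrict, mul_comm s]

theorem derivative_lineRestrict [Fintype σ] (a w : σ → R) (f : MvPolynomial σ ℝ) :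
    Polynomial.derivative (lineRestrict a w f) =
      ∑ i, lineRestrict a w (pderiv i f) * Polynomial.C (w i) := by
  classical
  induction f using MvPolynomial.induction_on with
  | C c => simp [lineRestrict, Polynomial.algebraMap_apply]
  | add p q hp hq => simp only [map_add, hp, hq, add_mul, Finset.sum_add_distrib]
  | mul_X p i hp =>
    have hX : Polynomial.derivative (lineRestrict a w (X i)) = Polynomial.C (w i) := by
      simp [lineRestrict]
    simp only [Derivation.leibniz, pderiv_X, smul_eq_mul, map_add, map_mul,
      Polynomial.derivative_mul, hp, hX, add_mul, Finset.sum_add_distrib, Finset.sum_mul]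
    rw [add_comm]
    refine congrArg₂ _ ?_ (Finset.sum_congr rfl fun j _ => by ring)
    simp [Pi.single_apply, apply_ite (lineRestrict a w)]

theorem IsSOSConvex.isSumSq_derivative_derivative_lineRestrict {m : ℕ}
    {f : MvPolynomial (Fin m) ℝ} (hf : IsSOSConvex f) (a w : Fin m → R) :
    IsSumSq (Polynomial.derivative (Polynomial.derivative (lineRestrict a w f))) := by
  obtain ⟨s, P, hP⟩ := hf
  have hentry : ∀ i j, pderiv i (pderiv j f) = ∑ t, P t i * P t j := fun i j =>
    congrFun (congrFun hP i) j
  have hsq : Polynomial.derivative (Polynomial.derivative (lineRestrict a w f)) =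
      ∑ t, (∑ i, lineRestrict a w (P t i) * Polynomial.C (w i)) ^ 2 := by
    simp only [derivative_lineRestrict, Polynomial.derivative_mul,
      Polynomial.derivative_C, mul_zero, add_zero, hentry, map_sum, map_mul, Finset.sum_mul, sq,
      Finset.mul_sum]
    rw [Finset.sum_comm_cycle]
    exact Finset.sum_congr rfl fun _ _ => Finset.sum_congr rfl fun _ _ =>
      Finset.sum_congr rfl fun _ _ => by ring
  rw [hsq]
  exact IsSumSq.sum_sq _ _

end LineRestriction

section Linearization

/-- The first-order Taylor polynomial of `f` at `a`. -/
def linearization {σ : Type*} [Fintype σ] (a : σ → ℝ) (f : MvPolynomial σ ℝ) : MvPolynomial σ ℝ :=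
  C (eval a f) + ∑ i, C (eval a (pderiv i f)) * (X i - C (a i))

theorem sub_linearization_eq_taylorIntegral {σ : Type*} [Fintype σ] (a : σ → ℝ)
    (f : MvPolynomial σ ℝ) :
    f - linearization a f = taylorIntegral (Polynomial.derivative (Polynomial.derivative
      (lineRestrict (fun i => C (a i)) (fun i => X i - C (a i)) f))) := by
  have hzero : ∀ q : MvPolynomial σ ℝ,
      aeval (fun i => C (a i) : σ → MvPolynomial σ ℝ) q = C (eval a q) := fun q =>
    aeval_algebraMap_apply _ a q
  have hone : (fun i => C (a i) : σ → MvPolynomial σ ℝ) + (fun i => X i - C (a i)) = X := by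
    ext1 i
    exact add_sub_cancel _ _
  rw [taylorIntegral_derivative_derivative, derivative_lineRestrict, linearization]
  simp only [Polynomial.eval_finsetSum, Polynomial.eval_mul, Polynomial.eval_C, eval_lineRestrict,
    zero_smul, add_zero, one_smul, hzero, hone, aeval_X_left_apply]
  rw [sub_sub]

variable {m : ℕ} {f : MvPolynomial (Fin m) ℝ}

theorem IsSOSConvex.isSOS_sub_linearization (hf : IsSOSConvex f) (a : Fin m → ℝ) :
    IsSOS (f - linearization a f) := by
  rw [isSOS_iff_isSumSq, sub_linearization_eq_taylorIntegral]
  exact isSumSq_taylorIntegral (hf.isSumSq_derivative_derivative_lineRestrict _ _)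

theorem convexOn_univ_of_forall_exists_subgradient {E : Type*} [AddCommGroup E] [Module ℝ E]
    {f : E → ℝ} (hf : ∀ z, ∃ l : E →ₗ[ℝ] ℝ, ∀ x, f z + l (x - z) ≤ f x) :
    ConvexOn ℝ Set.univ f := by
  refine ⟨convex_univ, fun x _ y _ a b ha hb hab => ?_⟩
  obtain ⟨l, hl⟩ := hf (a • x + b • y)
  have hx := mul_le_mul_of_nonneg_left (hl x) ha
  have hy := mul_le_mul_of_nonneg_left (hl y) hb
  have hsum : a * l (x - (a • x + b • y)) + b * l (y - (a • x + b • y)) = 0 := by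
    rw [← smul_eq_mul, ← smul_eq_mul, ← map_smul, ← map_smul, ← map_add,
      ← map_zero l]
    congr 1
    obtain rfl := eq_sub_of_add_eq hab
    module
  simp only [smul_eq_mul]
  linear_combination hx + hy - hsum - f (a • x + b • y) * hab

theorem IsSOSConvex.convexOn (hf : IsSOSConvex f) :
    ConvexOn ℝ Set.univ fun x => eval x f := by
  refine convexOn_univ_of_forall_exists_subgradient fun z =>
    ⟨∑ i, eval z (pderiv i f) • LinearMap.proj i, fun x => ?_⟩
  have hnonneg := (hf.isSOS_sub_linearization z).eval_nonneg x
  simp only [linearization, map_sub, map_add, map_sum, map_mul, eval_C, eval_X] at hnonneg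
  simpa using hnonneg

end Linearization

section Attainment

variable {E : Type*}

/-- The lineality space of `f`: the directions along which `f` is constant. -/
def linealitySpace [AddCommGroup E] [Module ℝ E] (f : E → ℝ) : Submodule ℝ E where
  carrier := {w | ∀ x (t : ℝ), f (x + t • w) = f x}
  zero_mem' x t := by rw [smul_zero, add_zero]
  add_mem' {v w} hv hw x t := by rw [smul_add, ← add_assoc, hw, hv]
  smul_mem' c w hw x t := by rw [smul_smul, hw]

variable [NormedAddCommGroup E] [NormedSpace ℝ E] [FiniteDimensional ℝ E] {f : E → ℝ}

-- An unbounded sublevel set would recede in some direction `w ≠ 0`, along which `f` is bounded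
-- above on every ray.
theorem isBounded_sublevel_inter_of_disjoint_linealitySpace (hcont : Continuous f)
    (hconv : QuasiconvexOn ℝ Set.univ f)
    (hray : ∀ x w c, (∀ t : ℝ, 0 ≤ t → f (x + t • w) ≤ c) → ∀ t : ℝ, f (x + t • w) = f x)
    {V : Submodule ℝ E} (hV : Disjoint (linealitySpace f) V) (c₀ : ℝ) :
    Bornology.IsBounded ({x | f x ≤ c₀} ∩ V) := by
  by_contra hunbdd
  obtain ⟨w, hw0, hw⟩ := not_bounded_iff_exists_ne_zero_mem_asymptoticCone.1 hunbdd
  have hwV : w ∈ V := by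
    have hmem := asymptoticCone_mono Set.inter_subset_right hw
    rwa [asymptoticCone_submodule, (Submodule.closed_of_finiteDimensional V).closure_eq] at hmem
  refine hw0 (Submodule.disjoint_def.1 hV w (fun z => hray z w (max (f z) c₀) fun t ht => ?_) hwV)
  have hsub : {x | f x ≤ c₀} ∩ V ⊆ {x | f x ≤ max (f z) c₀} := fun x hx =>
    hx.1.trans (le_max_right (f z) c₀)
  have hconvex : Convex ℝ {x | f x ≤ max (f z) c₀} := by simpa using hconv (max (f z) c₀)
  have hmem := hconvex.smul_vadd_mem_of_isClosed_of_mem_asymptoticCone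
    (isClosed_le hcont continuous_const) ht (asymptoticCone_mono hsub hw)
    (show f z ≤ max (f z) c₀ from le_max_left _ _)
  rwa [vadd_eq_add, add_comm] at hmem

theorem exists_forall_le_of_ray_constant (hcont : Continuous f)
    (hconv : QuasiconvexOn ℝ Set.univ f)
    (hray : ∀ x w c, (∀ t : ℝ, 0 ≤ t → f (x + t • w) ≤ c) → ∀ t : ℝ, f (x + t • w) = f x) :
    ∃ a, ∀ x, f a ≤ f x := by
  obtain ⟨V, hV⟩ := Submodule.exists_isCompl (linealitySpace f)
  have hcompact : IsCompact ({x | f x ≤ f 0} ∩ V) :=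
    Metric.isCompact_of_isClosed_isBounded
      ((isClosed_le hcont continuous_const).inter (Submodule.closed_of_finiteDimensional V))
      (isBounded_sublevel_inter_of_disjoint_linealitySpace hcont hconv hray hV.disjoint _)
  obtain ⟨a, -, ha⟩ := hcompact.exists_isMinOn ⟨0, le_refl (f 0), V.zero_mem⟩ hcont.continuousOn
  have ha0 : f a ≤ f 0 := ha ⟨le_refl (f 0), V.zero_mem⟩
  refine ⟨a, fun x => ?_⟩
  obtain ⟨k, hk, y, hy, rfl⟩ := Submodule.mem_sup.1 (hV.sup_eq_top ▸ Submodule.mem_top (x := x))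
  have hky : f (k + y) = f y := by simpa [add_comm] using hk y 1
  rw [hky]
  by_cases hy0 : f y ≤ f 0
  · exact ha ⟨hy0, hy⟩
  · exact ha0.trans (not_le.1 hy0).le

end Attainment

section Nonnegativity

variable {m : ℕ} {f : MvPolynomial (Fin m) ℝ}

theorem eval_lineRestrict_real {σ : Type*} (a w : σ → ℝ) (q : MvPolynomial σ ℝ) (t : ℝ) :
    (lineRestrict a w q).eval t = eval (a + t • w) q := eval_lineRestrict a w q t

theorem eval_eq_of_forall_nonneg_abs_le {p : Polynomial ℝ} {c : ℝ}
    (hp : ∀ t, 0 ≤ t → |p.eval t| ≤ c) (s t : ℝ) : p.eval s = p.eval t := by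
  have hdeg : p.degree ≤ 0 := p.isBoundedUnder_abs_atTop_iff.1
    ⟨c, Filter.eventually_map.2 ((Filter.eventually_ge_atTop 0).mono hp)⟩
  rw [Polynomial.eq_C_of_degree_le_zero hdeg, Polynomial.eval_C, Polynomial.eval_C]

theorem eval_pderiv_eq_zero_of_forall_le {σ : Type*} [Finite σ] {f : MvPolynomial σ ℝ} {a : σ → ℝ}
    (ha : ∀ x, eval a f ≤ eval x f) (i : σ) : eval a (pderiv i f) = 0 := by
  classical
  have := Fintype.ofFinite σ
  let p := lineRestrict a (Pi.single i 1) f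
  have hmin : IsLocalMin (fun t => p.eval t) 0 := Filter.Eventually.of_forall fun t => by
    simpa only [p, eval_lineRestrict_real, zero_smul, add_zero] using ha _
  have hzero := hmin.hasDerivAt_eq_zero (p.hasDerivAt 0)
  simpa [p, derivative_lineRestrict, Polynomial.eval_finsetSum, eval_lineRestrict_real,
    Pi.single_apply] using hzero

theorem IsSOSConvex.exists_forall_eval_le (hf : IsSOSConvex f) {b : ℝ}
    (hb : ∀ x, b ≤ eval x f) : ∃ a, ∀ x, eval a f ≤ eval x f := by
  refine exists_forall_le_of_ray_constant (MvPolynomial.continuous_eval f)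
    hf.convexOn.quasiconvexOn fun x w c hc t => ?_
  have hconst := eval_eq_of_forall_nonneg_abs_le (p := lineRestrict x w f) (c := max |b| |c|)
    (fun s hs => by
      rw [eval_lineRestrict_real]
      exact abs_le_max_abs_abs (hb _) (hc s hs)) t 0
  simpa only [eval_lineRestrict_real, zero_smul, add_zero] using hconst

theorem IsSOSConvex.isSOS_of_nonneg (hf : IsSOSConvex f) (hnonneg : ∀ x, 0 ≤ eval x f) :
    IsSOS f := by
  obtain ⟨a, ha⟩ := hf.exists_forall_eval_le hnonneg
  have hlin : linearization a f = C (eval a f) := by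
    simp [linearization, eval_pderiv_eq_zero_of_forall_le ha]
  have htangent := hf.isSOS_sub_linearization a
  rw [hlin, isSOS_iff_isSumSq] at htangent
  simpa [isSOS_iff_isSumSq] using htangent.add (isSumSq_C (hnonneg a))

end Nonnegativity

section ClosureProperties

variable {m : ℕ} {f g : MvPolynomial (Fin m) ℝ}

theorem polyHessian_add (f g : MvPolynomial (Fin m) ℝ) :
    polyHessian (f + g) = polyHessian f + polyHessian g := by
  ext1 i j
  simp [polyHessian]

theorem isSOSConvex_of_polyHessian_eq_zero (hf : polyHessian f = 0) : IsSOSConvex f :=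
  ⟨0, 0, by simpa using hf⟩

theorem isSOSConvex_C (c : ℝ) : IsSOSConvex (C c : MvPolynomial (Fin m) ℝ) :=
  isSOSConvex_of_polyHessian_eq_zero (by ext1 i j; simp [polyHessian])

theorem isSOSConvex_C_mul_X (c : ℝ) (k : Fin m) :
    IsSOSConvex (C c * X k : MvPolynomial (Fin m) ℝ) :=
  isSOSConvex_of_polyHessian_eq_zero <| by
    ext1 i j
    simp [polyHessian, pderiv_X, Pi.single_apply, apply_ite]

theorem IsSOSConvex.add (hf : IsSOSConvex f) (hg : IsSOSConvex g) : IsSOSConvex (f + g) := by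
  obtain ⟨s, P, hP⟩ := hf
  obtain ⟨t, Q, hQ⟩ := hg
  refine ⟨s + t, (fromRows P Q).submatrix finSumFinEquiv.symm id, ?_⟩
  rw [transpose_submatrix, submatrix_mul_equiv, submatrix_id_id, transpose_fromRows,
    fromCols_mul_fromRows, polyHessian_add, hP, hQ]

theorem IsSOSConvex.sum {ι : Type*} {s : Finset ι} {f : ι → MvPolynomial (Fin m) ℝ}
    (hf : ∀ i ∈ s, IsSOSConvex (f i)) : IsSOSConvex (∑ i ∈ s, f i) :=
  Finset.sum_induction f IsSOSConvex (fun _ _ => IsSOSConvex.add)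
    (isSOSConvex_of_polyHessian_eq_zero (by ext1 i j; simp [polyHessian])) hf

theorem IsSOSConvex.C_mul (hf : IsSOSConvex f) {c : ℝ} (hc : 0 ≤ c) : IsSOSConvex (C c * f) := by
  obtain ⟨s, P, hP⟩ := hf
  refine ⟨s, (C √c : MvPolynomial (Fin m) ℝ) • P, ?_⟩
  rw [transpose_smul, Matrix.smul_mul, Matrix.mul_smul, smul_smul, ← map_mul, Real.mul_self_sqrt hc,
    ← hP]
  ext1 i j
  simp [polyHessian]

end ClosureProperties

section ConicDuality

theorem exists_pos_add_smul_mem_of_mem_interior {E : Type*} [AddCommGroup E] [Module ℝ E]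
    [TopologicalSpace E] [ContinuousAdd E] [ContinuousSMul ℝ E] {S : Set E} {x : E}
    (hx : x ∈ interior S) (y : E) : ∃ ε : ℝ, 0 < ε ∧ x + ε • y ∈ S := by
  have hcont : Continuous fun ε : ℝ => x + ε • y := by fun_prop
  have hnhds : ∀ᶠ ε : ℝ in nhds 0, x + ε • y ∈ S :=
    hcont.continuousAt.eventually_mem (by simpa [mem_interior_iff_mem_nhds] using hx)
  exact (((hnhds.filter_mono nhdsWithin_le_nhds).and
    (self_mem_nhdsWithin (s := Set.Ioi 0))).exists).imp fun ε hε => hε.symm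

theorem linearMap_apply_pi_prod {ι W : Type*} [Fintype ι] [DecidableEq ι] [AddCommGroup W]
    [Module ℝ W] (l : (ι → ℝ) × W →ₗ[ℝ] ℝ) (y : ι → ℝ) (w : W) :
    l (y, w) = ∑ i, y i * l (Pi.single i 1, 0) + l (0, w) := by
  calc l (y, w) = l (∑ i, y i • (Pi.single i 1, 0) + (0, w)) := by
        congr 1
        ext <;> simp [Prod.fst_sum, Prod.snd_sum, Pi.single_apply]
    _ = ∑ i, y i * l (Pi.single i 1, 0) + l (0, w) := by
        simp only [map_add, map_sum, map_smul, smul_eq_mul]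

variable {V : Type*} [AddCommGroup V] [Module ℝ V] {A : PointedCone ℝ (V × ℝ)} {c : V} {p : ℝ}

theorem nonneg_of_mem_sup_span (hp : IsGLB {t | (c, t) ∈ A} p) {t : ℝ}
    (ht : ((0 : V), t) ∈ A ⊔ PointedCone.ofSubmodule (Submodule.span ℝ {(c, p)})) : 0 ≤ t := by
  obtain ⟨a, ha, b, hb, hab⟩ := Submodule.mem_sup.1 ht
  obtain ⟨s, rfl⟩ := Submodule.mem_span_singleton.1 (PointedCone.mem_ofSubmodule_iff.1 hb)
  obtain rfl : a = (-(s • c), t - s * p) := by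
    rw [eq_sub_of_add_eq hab]
    simp
  have hκ : 0 < |s| + 1 - s := by linarith [le_abs_self s]
  -- A large multiple of any `(c, t₀)` moves the decomposition of `(0, t)` back to the fibre
  -- over `c`.
  have hlower : ((|s| + 1 - s) * p - (t - s * p)) / (|s| + 1) ≤ p := by
    refine hp.2 fun t₀ ht₀ => ?_
    have hmem := A.smul_mem (inv_nonneg.2 hκ.le)
      (A.add_mem ha (A.smul_mem (by positivity : 0 ≤ |s| + 1) ht₀))
    have hfibre : (|s| + 1 - s)⁻¹ • ((-(s • c), t - s * p) + (|s| + 1) • (c, t₀)) =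
        (c, (|s| + 1 - s)⁻¹ * ((t - s * p) + (|s| + 1) * t₀)) := by
      have hvec : -(s • c) + (|s| + 1) • c = (|s| + 1 - s) • c := by module
      simp only [Prod.smul_mk, Prod.mk_add_mk, smul_eq_mul, hvec, inv_smul_smul₀ hκ.ne']
    have hle : p ≤ _ := hp.1 (show (c, _) ∈ A from hfibre ▸ hmem)
    rw [inv_mul_eq_div, le_div_iff₀ hκ] at hle
    rw [div_le_iff₀ (by positivity)]
    linarith
  rw [div_le_iff₀ (by positivity)] at hlower
  linarith

-- Riesz extension of `(0, t) ↦ t` from the vertical axis, over the cone `A` enlarged by the line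
-- through `(c, p)`.
theorem exists_linearMap_le_of_isGLB (hcore : ∀ y : V, ∃ ε : ℝ, 0 < ε ∧ ∃ t, (c + ε • y, t) ∈ A)
    (hp : IsGLB {t | (c, t) ∈ A} p) :
    ∃ l : V →ₗ[ℝ] ℝ, l c = p ∧ ∀ x t, (x, t) ∈ A → l x ≤ t := by
  set A' := A ⊔ PointedCone.ofSubmodule (Submodule.span ℝ {(c, p)})
  have hA : A ≤ A' := le_sup_left
  have hline : ∀ s : ℝ, s • (c, p) ∈ A' := fun s =>
    (le_sup_right : _ ≤ A') (PointedCone.mem_ofSubmodule_iff.2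
      (Submodule.smul_mem _ s (Submodule.mem_span_singleton_self _)))
  let axis : (V × ℝ) →ₗ.[ℝ] ℝ :=
    ⟨(⊥ : Submodule ℝ V).prod ⊤, LinearMap.snd ℝ V ℝ ∘ₗ Submodule.subtype _⟩
  obtain ⟨ψ, hψ, hψA⟩ := riesz_extension A' axis
    (fun ⟨(v, t), hv, _⟩ hmem => by
      obtain rfl : v = 0 := hv
      exact nonneg_of_mem_sup_span hp hmem)
    (fun ⟨v, t⟩ => by
      obtain ⟨ε, hε, t', ht'⟩ := hcore v
      refine ⟨⟨(0, ε⁻¹ * (t' - p) - t), rfl, trivial⟩, ?_⟩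
      have hmem := A'.smul_mem (inv_nonneg.2 hε.le) (A'.add_mem (hA ht') (hline (-1)))
      convert hmem using 1
      ext
      · simp [inv_smul_smul₀ hε.ne']
      · simp [sub_eq_add_neg])
  have haxis : ∀ t, ψ (0, t) = t := fun t => hψ ⟨(0, t), rfl, trivial⟩
  have hsplit : ∀ v t, ψ (v, t) = ψ (v, 0) + t := fun v t => by
    simpa [haxis] using ψ.map_add (v, 0) (0, t)
  refine ⟨-(ψ ∘ₗ LinearMap.inl ℝ V ℝ), ?_, fun x t hxt => ?_⟩
  · have hpos := hψA _ (hline 1)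
    have hneg := hψA _ (hline (-1))
    rw [map_smul, hsplit, smul_eq_mul] at hpos hneg
    simp only [LinearMap.neg_apply, LinearMap.comp_apply, LinearMap.inl_apply]
    linarith
  · have hnonneg := hψA _ (hA hxt)
    rw [hsplit] at hnonneg
    simp only [LinearMap.neg_apply, LinearMap.comp_apply, LinearMap.inl_apply]
    linarith

end ConicDuality

section MomentProblem

variable {α ι : Type*} [MeasurableSpace α]

/-- The values of the generalized moment problem: the integrals of `φ` over the probability measures
on `K` whose `η`-moments are bounded by `γ`. -/
def momentValues (K : Set α) (φ : α → ℝ) (η : ι → α → ℝ) (γ : ι → ℝ) : Set ℝ :=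
  {val | ∃ μ : Measure α, IsFiniteMeasure μ ∧ μ Kᶜ = 0 ∧ μ Set.univ = 1 ∧
    (∀ j, (∫ x, η j x ∂μ) ≤ γ j) ∧ val = ∫ x, φ x ∂μ}

/-- The moment vectors `(∫ η dμ, μ(K))` of finite measures on `K`, enlarged by the cone of slacks
`ℝ₊^ι × {0}`. -/
def momentRange (K : Set α) (η : ι → α → ℝ) : Set ((ι → ℝ) × ℝ) :=
  {q | ∃ (μ : Measure α) (s : ι → ℝ), IsFiniteMeasure μ ∧ μ Kᶜ = 0 ∧ (∀ j, 0 ≤ s j) ∧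
    (∀ j, q.1 j = (∫ x, η j x ∂μ) + s j) ∧ q.2 = (μ Set.univ).toReal}

variable [TopologicalSpace α] [T2Space α] [OpensMeasurableSpace α] {K : Set α} {φ : α → ℝ}
  {η : ι → α → ℝ} {γ : ι → ℝ}

theorem integrable_of_continuousOn_isCompact (hK : IsCompact K) {μ : Measure α} [IsFiniteMeasure μ]
    (hμ : μ Kᶜ = 0) (hφ : ContinuousOn φ K) : Integrable φ μ := by
  rw [← Measure.restrict_eq_self_of_ae_mem (ae_iff.2 hμ : ∀ᵐ x ∂μ, x ∈ K)]
  exact hφ.integrableOn_compact hK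

/-- The cone of triples `((q, μ(K)), ∫ φ dμ)` with `∫ η dμ ≤ q`, over all finite measures `μ` on
the compact set `K`. -/
def momentCone (hK : IsCompact K) (hφ : ContinuousOn φ K) (hη : ∀ j, ContinuousOn (η j) K) :
    PointedCone ℝ (((ι → ℝ) × ℝ) × ℝ) where
  carrier := {x | ∃ μ : Measure α, IsFiniteMeasure μ ∧ μ Kᶜ = 0 ∧
    (∀ j, (∫ x, η j x ∂μ) ≤ x.1.1 j) ∧ x.1.2 = μ.real Set.univ ∧ x.2 = ∫ x, φ x ∂μ}
  zero_mem' := ⟨0, inferInstance, by simp⟩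
  add_mem' := by
    rintro x y ⟨μ, hμ, hμK, hμη, hμ1, hμφ⟩ ⟨μ', hμ', hμK', hμη', hμ1', hμφ'⟩
    refine ⟨μ + μ', inferInstance, by simp [hμK, hμK'], fun j => ?_, ?_, ?_⟩
    · rw [integral_add_measure (integrable_of_continuousOn_isCompact hK hμK (hη j))
        (integrable_of_continuousOn_isCompact hK hμK' (hη j))]
      exact add_le_add (hμη j) (hμη' j)
    · rw [measureReal_add_apply, Prod.fst_add, Prod.snd_add, hμ1, hμ1']
    · rw [integral_add_measure (integrable_of_continuousOn_isCompact hK hμK hφ)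
        (integrable_of_continuousOn_isCompact hK hμK' hφ), Prod.snd_add, hμφ, hμφ']
  smul_mem' := by
    rintro ⟨c, hc⟩ x ⟨μ, hμ, hμK, hμη, hμ1, hμφ⟩
    lift c to NNReal using hc
    refine ⟨c • μ, inferInstance, by simp [hμK], fun j => ?_, ?_, ?_⟩
    · rw [integral_smul_nnreal_measure]
      exact mul_le_mul_of_nonneg_left (hμη j) c.2
    · rw [measureReal_nnreal_smul_apply, ← hμ1]
      rfl
    · rw [integral_smul_nnreal_measure, ← hμφ]
      rfl

theorem momentCone_fibre (hK : IsCompact K) (hφ : ContinuousOn φ K)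
    (hη : ∀ j, ContinuousOn (η j) K) :
    {t | ((γ, 1), t) ∈ momentCone hK hφ hη} = momentValues K φ η γ := by
  ext t
  refine exists_congr fun μ => and_congr_right fun _ => and_congr_right fun _ => ?_
  simp only [measureReal_def, eq_comm (a := (1 : ℝ)), ENNReal.toReal_eq_one_iff]
  tauto

theorem exists_multipliers_of_isGLB_momentValues [Fintype ι] (hK : IsCompact K)
    (hφ : ContinuousOn φ K) (hη : ∀ j, ContinuousOn (η j) K)
    (hint : (γ, 1) ∈ interior (momentRange K η)) {p : ℝ} (hp : IsGLB (momentValues K φ η γ) p) :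
    ∃ (lam : ι → ℝ) (last : ℝ), (∀ j, 0 ≤ lam j) ∧
      (∀ ω ∈ K, 0 ≤ φ ω + ∑ j, lam j * η j ω + last) ∧ p = -∑ j, lam j * γ j - last := by
  classical
  rw [← momentCone_fibre hK hφ hη] at hp
  obtain ⟨l, hl, hle⟩ := exists_linearMap_le_of_isGLB (fun y => by
    obtain ⟨ε, hε, μ, s, hμ, hμK, hs, hq, hq1⟩ := exists_pos_add_smul_mem_of_mem_interior hint y
    exact ⟨ε, hε, ∫ x, φ x ∂μ, μ, hμ, hμK, fun j => by linarith [hq j, hs j], hq1, rfl⟩) hp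
  have hsplit : ∀ q t, l (q, t) = ∑ j, q j * l (Pi.single j 1, 0) + t * l (0, 1) := fun q t => by
    rw [linearMap_apply_pi_prod, ← smul_eq_mul t, ← map_smul, Prod.smul_mk, smul_zero, smul_eq_mul,
      mul_one]
  refine ⟨fun j => -l (Pi.single j 1, 0), -l (0, 1), fun j => ?_, fun ω hω => ?_, ?_⟩
  · have hsingle : (0 : ι → ℝ) ≤ Pi.single j 1 := Pi.single_nonneg.2 zero_le_one
    exact neg_nonneg.2 <| hle (Pi.single j 1, 0) 0
      ⟨0, inferInstance, by simp, fun i => by simpa using hsingle i, by simp, by simp⟩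
  · have hdirac := hle (fun j => η j ω, 1) (φ ω) ⟨Measure.dirac ω, inferInstance, by
      simp [hω], fun j => by simp, by simp, by simp⟩
    rw [hsplit] at hdirac
    simp only [neg_mul, Finset.sum_neg_distrib, mul_comm (l _)]
    linarith
  · rw [← hl, hsplit]
    simp [mul_comm]

theorem neg_sum_sub_le_of_mem_momentValues [Fintype ι] (hK : IsCompact K)
    (hφ : ContinuousOn φ K) (hη : ∀ j, ContinuousOn (η j) K) {lam : ι → ℝ} {last : ℝ}
    (hlam : ∀ j, 0 ≤ lam j) (hnonneg : ∀ ω ∈ K, 0 ≤ φ ω + ∑ j, lam j * η j ω + last)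
    {val : ℝ} (hval : val ∈ momentValues K φ η γ) : -∑ j, lam j * γ j - last ≤ val := by
  obtain ⟨μ, hμ, hμK, hμ1, hμη, rfl⟩ := hval
  have hprob : IsProbabilityMeasure μ := ⟨hμ1⟩
  have hφint := integrable_of_continuousOn_isCompact hK hμK hφ
  have hηint : Integrable (fun ω => ∑ j, lam j * η j ω) μ := integrable_finsetSum _ fun j _ =>
    (integrable_of_continuousOn_isCompact hK hμK (hη j)).const_mul (lam j)
  have hsum : Integrable (fun ω => φ ω + ∑ j, lam j * η j ω) μ := hφint.add hηint
  have hlagrangian : 0 ≤ ∫ ω, (φ ω + ∑ j, lam j * η j ω + last) ∂μ :=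
    integral_nonneg_of_ae ((ae_iff.2 hμK : ∀ᵐ ω ∂μ, ω ∈ K).mono hnonneg)
  rw [integral_add hsum (integrable_const _), integral_add hφint hηint,
    integral_finsetSum _ fun j _ =>
      (integrable_of_continuousOn_isCompact hK hμK (hη j)).const_mul (lam j)] at hlagrangian
  simp only [integral_const_mul, integral_const, probReal_univ, one_smul] at hlagrangian
  have hmoments : ∑ j, lam j * ∫ ω, η j ω ∂μ ≤ ∑ j, lam j * γ j :=
    Finset.sum_le_sum fun j _ => mul_le_mul_of_nonneg_left (hμη j) (hlam j)
  linarith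

end MomentProblem

section LagrangeDuality

theorem nonpos_of_forall_add_mul_le {a b u : ℝ} (h : ∀ c : ℝ, 0 < c → a + c * b ≤ u) : b ≤ 0 := by
  by_contra! hb
  have hlarge := h ((|u - a| + 1) / b) (by positivity)
  rw [div_mul_cancel₀ _ hb.ne'] at hlarge
  linarith [le_abs_self (u - a)]

theorem eq_zero_of_forall_dotProduct_le {n : Type*} [Fintype n] {c : n → ℝ} {b : ℝ}
    (h : ∀ x, x ⬝ᵥ c ≤ b) : c = 0 := by
  have hself : c ⬝ᵥ c ≤ 0 := nonpos_of_forall_add_mul_le (a := 0) (u := b) fun s _ => by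
    simpa using h (s • c)
  exact dotProduct_self_eq_zero.1
    (hself.antisymm (Finset.sum_nonneg fun i _ => mul_self_nonneg (c i)))

theorem exists_clm_neg_on_cone {E : Type*} [AddCommGroup E] [Module ℝ E] [TopologicalSpace E]
    [IsTopologicalAddGroup E] [ContinuousSMul ℝ E] {s t : Set E} (hs_open : IsOpen s)
    (hs_convex : Convex ℝ s) (hs_cone : ∀ c : ℝ, 0 < c → ∀ x ∈ s, c • x ∈ s) (hs : s.Nonempty)
    (ht_convex : Convex ℝ t) (ht : t.Nonempty) (hdisj : Disjoint s t) :
    ∃ f : E →L[ℝ] ℝ, (∀ x ∈ s, f x < 0) ∧ ∀ y ∈ t, 0 ≤ f y := by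
  obtain ⟨f, u, hfs, hft⟩ := geometric_hahn_banach_open hs_convex hs_open ht_convex hdisj
  obtain ⟨y₀, hy₀⟩ := ht
  obtain ⟨x₀, hx₀⟩ := hs
  have hnonpos : ∀ x ∈ s, f x ≤ 0 := fun x hx =>
    nonpos_of_forall_add_mul_le (a := 0) (u := u) fun c hc => by
      simpa using (hfs _ (hs_cone c hc x hx)).le
  refine ⟨f, fun x hx => (hnonpos x hx).lt_of_ne fun hx0 => ?_, fun y hy => ?_⟩
  · have hf : ∀ y, f y ≤ 0 := fun y => by
      obtain ⟨ε, hε, hmem⟩ :=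
        exists_pos_add_smul_mem_of_mem_interior (hs_open.interior_eq.symm ▸ hx) y
      have hεy := hnonpos _ hmem
      rw [map_add, map_smul, hx0, zero_add, smul_eq_mul] at hεy
      exact nonpos_of_mul_nonpos_right hεy hε
    have hu := hfs x hx
    linarith [hft y₀ hy₀, hf y₀]
  · refine neg_nonpos.1 (nonpos_of_forall_add_mul_le (a := f x₀) (u := 0) fun c hc => ?_)
    have hlt := (hfs _ (hs_cone c⁻¹ (inv_pos.2 hc) x₀ hx₀)).trans_le (hft y hy)
    rw [map_smul, smul_eq_mul, inv_mul_lt_iff₀ hc] at hlt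
    linarith

variable {ι W : Type*} [AddCommGroup W] [Module ℝ W] {C : Set W}

theorem apply_single_nonneg_of_neg [DecidableEq ι] {f : (ι → ℝ) × W →ₗ[ℝ] ℝ}
    (hneg : ∀ y w, (∀ i, y i < 0) → w ∈ C → f (y, w) < 0) (hC : C.Nonempty) (i : ι) :
    0 ≤ f (Pi.single i 1, 0) := by
  obtain ⟨w, hw⟩ := hC
  have hsingle : (0 : ι → ℝ) ≤ Pi.single i 1 := Pi.single_nonneg.2 zero_le_one
  refine neg_nonpos.1 (nonpos_of_forall_add_mul_le (a := f (-1, w)) (u := 0) fun c hc => ?_)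
  have hlt := hneg (-1 - c • Pi.single i 1) w
    (fun j => (sub_le_self _ (mul_nonneg hc.le (hsingle j))).trans_lt neg_one_lt_zero) hw
  have hsplit : ((-1 - c • Pi.single i 1, w) : (ι → ℝ) × W) =
      (-1, w) - c • (Pi.single i 1, 0) := by simp
  rw [hsplit, map_sub, map_smul, smul_eq_mul] at hlt
  linarith

theorem apply_zero_nonpos_of_neg {f : (ι → ℝ) × W →ₗ[ℝ] ℝ}
    (hneg : ∀ y w, (∀ i, y i < 0) → w ∈ C → f (y, w) < 0)
    (hC_cone : ∀ c : ℝ, 0 < c → ∀ w ∈ C, c • w ∈ C) {w : W} (hw : w ∈ C) : f (0, w) ≤ 0 := by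
  refine nonpos_of_forall_add_mul_le (a := f (-1, 0)) (u := 0) fun c hc => ?_
  have hlt := hneg (-1) (c • w) (fun _ => neg_one_lt_zero) (hC_cone c hc w hw)
  have hsplit : ((-1, c • w) : (ι → ℝ) × W) = (-1, 0) + c • (0, w) := by simp
  rw [hsplit, map_add, map_smul, smul_eq_mul] at hlt
  exact hlt.le

variable {X : Type*} [AddCommGroup X] [Module ℝ X] [TopologicalSpace W] [IsTopologicalAddGroup W]
  [ContinuousSMul ℝ W] {u : ι → X → ℝ}

theorem exists_clm_of_alternative [Finite ι] (hu : ∀ i, ConvexOn ℝ Set.univ (u i))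
    (hC_open : IsOpen C) (hC_convex : Convex ℝ C)
    (hC_cone : ∀ c : ℝ, 0 < c → ∀ w ∈ C, c • w ∈ C) (G : X →ᵃ[ℝ] W)
    (hslater : ∃ x, G x ∈ C) (halt : ∀ x, G x ∈ C → ∃ i, 0 ≤ u i x) :
    ∃ f : (ι → ℝ) × W →L[ℝ] ℝ, (∀ y w, (∀ i, y i < 0) → w ∈ C → f (y, w) < 0) ∧
      ∀ x, 0 ≤ f (fun i => u i x, G x) := by
  obtain ⟨x₀, hx₀⟩ := hslater
  let epi : Set ((ι → ℝ) × W) := {q | ∃ x, (∀ i, u i x ≤ q.1 i) ∧ G x = q.2}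
  have hepi_convex : Convex ℝ epi := by
    rintro q ⟨x, hx, hxG⟩ q' ⟨x', hx', hxG'⟩ a b ha hb hab
    refine ⟨a • x + b • x', fun i => ?_, ?_⟩
    · exact ((hu i).2 trivial trivial ha hb hab).trans
        (add_le_add (mul_le_mul_of_nonneg_left (hx i) ha) (mul_le_mul_of_nonneg_left (hx' i) hb))
    · rw [Convex.combo_affine_apply hab, hxG, hxG']
      rfl
  obtain ⟨f, hneg, hnonneg⟩ := exists_clm_neg_on_cone
    (s := Set.pi Set.univ (fun _ => Set.Iio 0) ×ˢ C) (t := epi)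
    ((isOpen_set_pi Set.finite_univ fun _ _ => isOpen_Iio).prod hC_open)
    ((convex_pi fun _ _ => convex_Iio 0).prod hC_convex)
    (fun c hc q hq => ⟨fun i _ => mul_neg_of_pos_of_neg hc (hq.1 i trivial), hC_cone c hc _ hq.2⟩)
    ⟨(-1, G x₀), fun _ _ => neg_one_lt_zero (R := ℝ), hx₀⟩ hepi_convex
    ⟨(fun i => u i x₀, G x₀), x₀, fun _ => le_rfl, rfl⟩
    (Set.disjoint_left.2 fun q hq ⟨x, hx, hxG⟩ => by
      obtain ⟨i, hi⟩ := halt x (hxG ▸ hq.2)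
      exact ((hi.trans (hx i)).trans_lt (hq.1 i trivial)).false)
  exact ⟨f, fun y w hy hw => hneg _ ⟨fun i _ => hy i, hw⟩,
    fun x => hnonneg _ ⟨x, fun _ => le_rfl, rfl⟩⟩

theorem exists_lagrange_multipliers [Fintype ι] (hu : ∀ i, ConvexOn ℝ Set.univ (u i))
    (hC_open : IsOpen C) (hC_convex : Convex ℝ C)
    (hC_cone : ∀ c : ℝ, 0 < c → ∀ w ∈ C, c • w ∈ C) (G : X →ᵃ[ℝ] W)
    (hslater : ∃ x, G x ∈ C) (halt : ∀ x, G x ∈ C → ∃ i, 0 ≤ u i x) :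
    ∃ (δ : ι → ℝ) (z : W →L[ℝ] ℝ), (∀ i, 0 ≤ δ i) ∧ ∑ i, δ i = 1 ∧ (∀ w ∈ C, 0 ≤ z w) ∧
      ∀ x, z (G x) ≤ ∑ i, δ i * u i x := by
  classical
  obtain ⟨f, hneg, hnonneg⟩ :=
    exists_clm_of_alternative hu hC_open hC_convex hC_cone G hslater halt
  obtain ⟨x₀, hx₀⟩ := hslater
  let δ : ι → ℝ := fun i => f (Pi.single i 1, 0)
  let z : W →L[ℝ] ℝ := -(f ∘L ContinuousLinearMap.inr ℝ (ι → ℝ) W)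
  have hf : ∀ y w, f (y, w) = ∑ i, δ i * y i - z w := fun y w => by
    simpa [δ, z, mul_comm] using linearMap_apply_pi_prod f.toLinearMap y w
  have hδ : ∀ i, 0 ≤ δ i := apply_single_nonneg_of_neg (f := f.toLinearMap) hneg ⟨_, hx₀⟩
  have hz : ∀ w ∈ C, 0 ≤ z w := fun w hw =>
    neg_nonneg.2 (apply_zero_nonpos_of_neg (f := f.toLinearMap) hneg hC_cone hw)
  have hle : ∀ x, z (G x) ≤ ∑ i, δ i * u i x := fun x => by
    simpa only [hf, sub_nonneg] using hnonneg x
  have hsum : 0 < ∑ i, δ i := by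
    have hlt := hneg (-1) (G x₀) (fun _ => neg_one_lt_zero) hx₀
    simp only [hf, Pi.neg_apply, Pi.one_apply, mul_neg_one, Finset.sum_neg_distrib] at hlt
    refine (Finset.sum_nonneg fun i _ => hδ i).lt_of_ne fun hzero => ?_
    have hall : ∀ i, δ i = 0 := fun i =>
      (Finset.sum_eq_zero_iff_of_nonneg fun i _ => hδ i).1 hzero.symm i (Finset.mem_univ i)
    have hge := hle x₀
    simp only [hall, zero_mul, Finset.sum_const_zero] at hlt hge
    linarith
  refine ⟨fun i => (∑ i, δ i)⁻¹ * δ i, (∑ i, δ i)⁻¹ • z,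
    fun i => mul_nonneg (inv_nonneg.2 hsum.le) (hδ i), ?_,
    fun w hw => mul_nonneg (inv_nonneg.2 hsum.le) (hz w hw), fun x => ?_⟩
  · rw [← Finset.mul_sum, inv_mul_cancel₀ hsum.ne']
  · simp only [mul_assoc, ← Finset.mul_sum]
    exact mul_le_mul_of_nonneg_left (hle x) (inv_nonneg.2 hsum.le)

end LagrangeDuality

section LinearMatrixInequality

variable {n : Type*}

section Pencil

variable {σ τ : Type*} [Fintype σ] [Fintype τ]

/-- The linear matrix pencil `(v, ξ) ↦ F₀ + ∑ i, v i • F i + ∑ t, ξ t • M t`. -/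
def pencil (F₀ : Matrix n n ℝ) (F : σ → Matrix n n ℝ) (M : τ → Matrix n n ℝ) :
    ((σ → ℝ) × (τ → ℝ)) →ᵃ[ℝ] Matrix n n ℝ :=
  AffineMap.const ℝ _ F₀ +
    ((Fintype.linearCombination ℝ F).coprod (Fintype.linearCombination ℝ M)).toAffineMap

variable (F₀ : Matrix n n ℝ) (F : σ → Matrix n n ℝ) (M : τ → Matrix n n ℝ)

theorem pencil_apply (v : σ → ℝ) (ξ : τ → ℝ) :
    pencil F₀ F M (v, ξ) = F₀ + ∑ i, v i • F i + ∑ t, ξ t • M t := by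
  simp [pencil, Fintype.linearCombination_apply, add_assoc]

variable {F₀ F M}

theorem isSymm_pencil (hF₀ : F₀.IsSymm) (hF : ∀ i, (F i).IsSymm) (hM : ∀ t, (M t).IsSymm)
    (x : (σ → ℝ) × (τ → ℝ)) : (pencil F₀ F M x).IsSymm := by
  rw [IsSymm, pencil_apply]
  simp only [transpose_add, transpose_sum, transpose_smul, hF₀.eq, (hF _).eq, (hM _).eq]

end Pencil

variable [Fintype n]

/-- The matrices whose quadratic form is positive off the origin. No symmetry is imposed, which
makes this an open cone in the space of all matrices. -/
def posFormCone (n : Type*) [Fintype n] : Set (Matrix n n ℝ) :=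
  {S | ∀ x, x ≠ 0 → 0 < x ⬝ᵥ S *ᵥ x}

theorem isOpen_posFormCone : IsOpen (posFormCone n) := by
  have hsphere : posFormCone n = {S | ∀ x ∈ Metric.sphere (0 : n → ℝ) 1, 0 < x ⬝ᵥ S *ᵥ x} := by
    ext S
    refine ⟨fun hS x hx => hS x (ne_zero_of_mem_unit_sphere ⟨x, hx⟩), fun hS x hx => ?_⟩
    have hunit := hS (‖x‖⁻¹ • x) (by simp [norm_smul, hx])
    rw [mulVec_smul, dotProduct_smul, smul_dotProduct, smul_eq_mul, smul_eq_mul] at hunit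
    have hinv : 0 < ‖x‖⁻¹ := inv_pos.2 (norm_pos_iff.2 hx)
    exact pos_of_mul_pos_right (pos_of_mul_pos_right hunit hinv.le) hinv.le
  rw [hsphere, isOpen_iff_mem_nhds]
  intro S hS
  refine (isCompact_sphere (0 : n → ℝ) 1).eventually_forall_of_forall_eventually
    (P := fun S x => 0 < x ⬝ᵥ S *ᵥ x) fun x hx => ?_
  have hcont : Continuous fun z : Matrix n n ℝ × (n → ℝ) => z.2 ⬝ᵥ z.1 *ᵥ z.2 := by fun_prop
  exact hcont.continuousAt.eventually (lt_mem_nhds (hS x hx))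

theorem convex_posFormCone : Convex ℝ (posFormCone n) := by
  intro S hS T hT a b ha hb hab x hx
  rw [add_mulVec, dotProduct_add, smul_mulVec, smul_mulVec, dotProduct_smul, dotProduct_smul]
  exact (convex_Ioi (0 : ℝ)) (hS x hx) (hT x hx) ha hb hab

theorem smul_mem_posFormCone {c : ℝ} (hc : 0 < c) {S : Matrix n n ℝ} (hS : S ∈ posFormCone n) :
    c • S ∈ posFormCone n := fun x hx => by
  rw [smul_mulVec, dotProduct_smul]
  exact mul_pos hc (hS x hx)

theorem posDef_mem_posFormCone {S : Matrix n n ℝ} (hS : S.PosDef) : S ∈ posFormCone n :=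
  fun _ hx => by simpa using hS.dotProduct_mulVec_pos hx

theorem posSemidef_of_mem_posFormCone {S : Matrix n n ℝ} (hsymm : S.IsSymm)
    (hS : S ∈ posFormCone n) : S.PosSemidef :=
  (PosDef.of_dotProduct_mulVec_pos (by simpa [IsHermitian] using hsymm.eq)
    fun x hx => by simpa using hS x hx).posSemidef

theorem exists_isSymm_trace_mul_eq (z : Matrix n n ℝ →ₗ[ℝ] ℝ) :
    ∃ Z : Matrix n n ℝ, Z.IsSymm ∧ ∀ S : Matrix n n ℝ, S.IsSymm → (Z * S).trace = z S := by
  classical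
  let w : Matrix n n ℝ := of fun i j => z (single i j 1)
  refine ⟨(2⁻¹ : ℝ) • (w + wᵀ), (isSymm_add_transpose_self w).smul _, fun S hS => ?_⟩
  have hw : (w * S).trace = z S := by
    conv_rhs => rw [matrix_eq_sum_single S]
    simp only [trace, diag_apply, mul_apply, map_sum]
    refine Finset.sum_congr rfl fun i _ => Finset.sum_congr rfl fun j _ => ?_
    rw [hS.apply, ← mul_one (S i j), ← smul_eq_mul (S i j) 1, ← smul_single, map_smul, smul_eq_mul,
      smul_eq_mul, mul_one, mul_comm]
    rfl
  have hwt : (wᵀ * S).trace = (w * S).trace := by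
    rw [← trace_transpose, transpose_mul, hS.eq, transpose_transpose, trace_mul_comm]
  rw [smul_mul, add_mul, trace_smul, trace_add, hwt, hw, smul_eq_mul]
  ring

theorem exists_posSemidef_trace_mul_eq (z : Matrix n n ℝ →ₗ[ℝ] ℝ)
    (hz : ∀ S : Matrix n n ℝ, S.PosDef → 0 ≤ z S) :
    ∃ Z : Matrix n n ℝ, Z.PosSemidef ∧ ∀ S : Matrix n n ℝ, S.IsSymm → (Z * S).trace = z S := by
  classical
  obtain ⟨Z, hsymm, hZ⟩ := exists_isSymm_trace_mul_eq z
  refine ⟨Z, PosSemidef.of_dotProduct_mulVec_nonneg (by simpa [IsHermitian] using hsymm.eq)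
    fun x => ?_, hZ⟩
  have hform : x ⬝ᵥ Z *ᵥ x = z (vecMulVec x x) := by
    rw [← hZ _ (transpose_vecMulVec x x), mul_vecMulVec, trace_vecMulVec, dotProduct_comm]
  rw [star_trivial, hform]
  refine neg_nonpos.1 (nonpos_of_forall_add_mul_le (a := -z 1) (u := 0) fun c hc => ?_)
  have hposDef : (1 + c • vecMulVec x x).PosDef := PosDef.one.add_posSemidef <|
    PosSemidef.smul (by simpa using posSemidef_vecMulVec_self_star x) hc.le
  have hnonneg := hz _ hposDef
  rw [map_add, map_smul, smul_eq_mul] at hnonneg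
  linarith

theorem trace_mul_nonneg {A B : Matrix n n ℝ} (hA : A.PosSemidef) (hB : B.PosSemidef) :
    0 ≤ (A * B).trace := by
  obtain ⟨k, v, rfl⟩ := posSemidef_iff_eq_sum_vecMulVec.1 hB
  rw [Matrix.mul_sum, trace_sum]
  refine Finset.sum_nonneg fun i _ => ?_
  rw [mul_vecMulVec, trace_vecMulVec, dotProduct_comm]
  exact hA.dotProduct_mulVec_nonneg (v i)

theorem trace_mul_pencil {σ τ : Type*} [Fintype σ] [Fintype τ] (F₀ : Matrix n n ℝ)
    (F : σ → Matrix n n ℝ) (M : τ → Matrix n n ℝ) (Z : Matrix n n ℝ) (v : σ → ℝ) (ξ : τ → ℝ) :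
    (Z * pencil F₀ F M (v, ξ)).trace =
      (Z * F₀).trace + ∑ i, (Z * F i).trace * v i + ξ ⬝ᵥ fun t => (Z * M t).trace := by
  simp only [pencil_apply, mul_add, Matrix.mul_sum, Matrix.mul_smul, trace_add, trace_sum,
    trace_smul, smul_eq_mul, mul_comm, dotProduct]

end LinearMatrixInequality

section ProjectedSpectrahedron

variable {m N ν : ℕ} {F0 : Matrix (Fin ν) (Fin ν) ℝ} {F : Fin m → Matrix (Fin ν) (Fin ν) ℝ}
  {M : Fin N → Matrix (Fin ν) (Fin ν) ℝ}

theorem mem_projSpec_iff {v : Fin m → ℝ} :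
    v ∈ projSpec F0 F M ↔ ∃ ξ, (pencil F0 F M (v, ξ)).PosSemidef := by
  exact exists_congr fun ξ => by rw [pencil_apply]

theorem trace_nonneg_of_mem_projSpec {Z : Matrix (Fin ν) (Fin ν) ℝ} (hZ : Z.PosSemidef)
    (hZM : ∀ t, (Z * M t).trace = 0) {v : Fin m → ℝ} (hv : v ∈ projSpec F0 F M) :
    0 ≤ (Z * F0).trace + ∑ i, (Z * F i).trace * v i := by
  obtain ⟨ξ, hξ⟩ := mem_projSpec_iff.1 hv
  have hnonneg := trace_mul_nonneg hZ hξ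
  rwa [trace_mul_pencil, funext hZM, ← Pi.zero_def, dotProduct_zero, add_zero] at hnonneg

theorem exists_lmi_multipliers {ι : Type*} [Fintype ι] (hF0 : F0.IsSymm)
    (hF : ∀ i, (F i).IsSymm) (hM : ∀ t, (M t).IsSymm)
    (hslater : ∃ v ξ, (pencil F0 F M (v, ξ)).PosDef) {u : ι → (Fin m → ℝ) → ℝ}
    (hu : ∀ i, ConvexOn ℝ Set.univ (u i)) (halt : ∀ v ∈ projSpec F0 F M, ∃ i, 0 ≤ u i v) :
    ∃ (δ : ι → ℝ) (Z : Matrix (Fin ν) (Fin ν) ℝ), (∀ i, 0 ≤ δ i) ∧ ∑ i, δ i = 1 ∧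
      Z.PosSemidef ∧ (∀ t, (Z * M t).trace = 0) ∧
      ∀ v, (Z * F0).trace + ∑ i, (Z * F i).trace * v i ≤ ∑ i, δ i * u i v := by
  have hsymm := isSymm_pencil hF0 hF hM
  obtain ⟨vbar, ξbar, hbar⟩ := hslater
  obtain ⟨δ, z, hδ, hδ1, hz, hle⟩ := exists_lagrange_multipliers
    (fun i => (hu i).comp_linearMap (LinearMap.fst ℝ (Fin m → ℝ) (Fin N → ℝ)))
    isOpen_posFormCone convex_posFormCone (fun c hc S => smul_mem_posFormCone hc)
    (pencil F0 F M) ⟨(vbar, ξbar), posDef_mem_posFormCone hbar⟩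
    (fun x hx => halt x.1 (mem_projSpec_iff.2
      ⟨x.2, posSemidef_of_mem_posFormCone (hsymm x) hx⟩))
  obtain ⟨Z, hZ, hZz⟩ := exists_posSemidef_trace_mul_eq z.toLinearMap
    fun S hS => hz S (posDef_mem_posFormCone hS)
  have hbound : ∀ v ξ, (Z * F0).trace + ∑ i, (Z * F i).trace * v i +
      ξ ⬝ᵥ (fun t => (Z * M t).trace) ≤ ∑ i, δ i * u i v := fun v ξ => by
    rw [← trace_mul_pencil, hZz _ (hsymm _)]
    exact hle (v, ξ)
  have hZM : (fun t => (Z * M t).trace) = 0 := eq_zero_of_forall_dotProduct_le fun ξ =>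
    le_sub_iff_add_le'.2 (hbound 0 ξ)
  exact ⟨δ, Z, hδ, hδ1, hZ, congrFun hZM, fun v => by simpa using hbound v 0⟩

end ProjectedSpectrahedron

section SOSProgram

theorem totalDegree_sub_sum_C_mul_X_le {σ : Type*} [Fintype σ] {q : MvPolynomial σ ℝ} {d : ℕ}
    (hq : q.totalDegree ≤ d) {c : σ → ℝ} (hnonneg : ∀ x, 0 ≤ eval x (q - ∑ i, C (c i) * X i)) :
    (q - ∑ i, C (c i) * X i).totalDegree ≤ d := by
  rcases d.eq_zero_or_pos with rfl | hd
  · -- A constant dominates the linear form `c`, so `c = 0`.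
    obtain ⟨b, rfl⟩ : ∃ b, q = C b := ⟨_, totalDegree_eq_zero_iff_eq_C.1 (Nat.le_zero.1 hq)⟩
    have hc : c = 0 := eq_zero_of_forall_dotProduct_le (b := b) fun x => by
      simpa [dotProduct, mul_comm] using hnonneg x
    simp [hc]
  · refine (totalDegree_sub _ _).trans (max_le hq (totalDegree_finsetSum_le fun i _ => ?_))
    exact (totalDegree_mul _ _).trans (by simpa using Nat.one_le_iff_ne_zero.2 hd.ne')

variable {m N ν J : ℕ} {ι : Type*} [Fintype ι]

/-- The Lagrangian `∑ ℓ, δ ℓ * g ℓ + ∑ j, lam j * h j + last` of one piece `max_ℓ g ℓ`. -/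
def pieceLagrangian (g : ι → MvPolynomial (Fin m) ℝ) (h : Fin J → MvPolynomial (Fin m) ℝ)
    (lam : Fin J → ℝ) (last : ℝ) (δ : ι → ℝ) : MvPolynomial (Fin m) ℝ :=
  ∑ ℓ, C (δ ℓ) * g ℓ + ∑ j, C (lam j) * h j + C last

/-- The polynomial that the dual program requires to be a sum of squares: the Lagrangian of one
piece minus the affine form `v ↦ tr (Z F₀) + ∑ i, tr (Z F i) v i`. -/
def dualCertificate (F0 : Matrix (Fin ν) (Fin ν) ℝ) (F : Fin m → Matrix (Fin ν) (Fin ν) ℝ)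
    (g : ι → MvPolynomial (Fin m) ℝ) (h : Fin J → MvPolynomial (Fin m) ℝ)
    (lam : Fin J → ℝ) (last : ℝ) (Z : Matrix (Fin ν) (Fin ν) ℝ) (δ : ι → ℝ) :
    MvPolynomial (Fin m) ℝ :=
  pieceLagrangian g h lam last δ - C ((Z * F0).trace) - ∑ i, C ((Z * F i).trace) * X i

/-- The objective values attained on the feasible set of the dual program `(D)`. -/
def sosValues {r L : ℕ} (F0 : Matrix (Fin ν) (Fin ν) ℝ)
    (F : Fin m → Matrix (Fin ν) (Fin ν) ℝ) (M : Fin N → Matrix (Fin ν) (Fin ν) ℝ)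
    (g : Fin r → Fin L → MvPolynomial (Fin m) ℝ) (h : Fin J → MvPolynomial (Fin m) ℝ)
    (γ : Fin J → ℝ) (d : ℕ) : Set ℝ :=
  {val | ∃ (lam : Fin J → ℝ) (last : ℝ) (Z : Fin r → Matrix (Fin ν) (Fin ν) ℝ)
    (δ : Fin r → Fin L → ℝ),
    (∀ j, 0 ≤ lam j) ∧ (∀ k, (Z k).PosSemidef) ∧
    (∀ k ℓ, 0 ≤ δ k ℓ) ∧ (∀ k, ∑ ℓ, δ k ℓ = 1) ∧
    (∀ k, IsSOSDeg d (dualCertificate F0 F (g k) h lam last (Z k) (δ k))) ∧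
    (∀ k t, (Z k * M t).trace = 0) ∧ val = -∑ j, lam j * γ j - last}

variable {F0 : Matrix (Fin ν) (Fin ν) ℝ} {F : Fin m → Matrix (Fin ν) (Fin ν) ℝ}
  {M : Fin N → Matrix (Fin ν) (Fin ν) ℝ} {g : ι → MvPolynomial (Fin m) ℝ}
  {h : Fin J → MvPolynomial (Fin m) ℝ} {lam : Fin J → ℝ} {last : ℝ}
  {Z : Matrix (Fin ν) (Fin ν) ℝ} {δ : ι → ℝ} {d : ℕ}

theorem eval_pieceLagrangian (v : Fin m → ℝ) : eval v (pieceLagrangian g h lam last δ) =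
    ∑ ℓ, δ ℓ * eval v (g ℓ) + ∑ j, lam j * eval v (h j) + last := by
  simp only [pieceLagrangian, map_add, map_sum, map_mul, eval_C]

theorem eval_dualCertificate (v : Fin m → ℝ) : eval v (dualCertificate F0 F g h lam last Z δ) =
    eval v (pieceLagrangian g h lam last δ) -
      ((Z * F0).trace + ∑ i, (Z * F i).trace * v i) := by
  simp only [dualCertificate, map_sub, map_sum, map_mul, eval_C, eval_X, sub_add_eq_sub_sub]

theorem isSOSConvex_pieceLagrangian (hg : ∀ ℓ, IsSOSConvex (g ℓ)) (hh : ∀ j, IsSOSConvex (h j))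
    (hlam : ∀ j, 0 ≤ lam j) (hδ : ∀ ℓ, 0 ≤ δ ℓ) :
    IsSOSConvex (pieceLagrangian g h lam last δ) :=
  ((IsSOSConvex.sum fun ℓ _ => (hg ℓ).C_mul (hδ ℓ)).add
    (IsSOSConvex.sum fun j _ => (hh j).C_mul (hlam j))).add (isSOSConvex_C last)

theorem isSOSConvex_dualCertificate
    (hlagrangian : IsSOSConvex (pieceLagrangian g h lam last δ)) :
    IsSOSConvex (dualCertificate F0 F g h lam last Z δ) := by
  have haffine := (hlagrangian.add (isSOSConvex_C (-(Z * F0).trace))).add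
    (IsSOSConvex.sum (s := Finset.univ) fun i _ => isSOSConvex_C_mul_X (-(Z * F i).trace) i)
  simpa only [dualCertificate, map_neg, neg_mul, Finset.sum_neg_distrib, ← sub_eq_add_neg]
    using haffine

theorem totalDegree_pieceLagrangian_le (hgd : ∀ ℓ, (g ℓ).totalDegree ≤ d)
    (hhd : ∀ j, (h j).totalDegree ≤ d) : (pieceLagrangian g h lam last δ).totalDegree ≤ d := by
  have hscale : ∀ (a : ℝ) {q : MvPolynomial (Fin m) ℝ}, q.totalDegree ≤ d →
      (C a * q).totalDegree ≤ d := fun a q hq =>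
    (totalDegree_mul _ _).trans (by rwa [totalDegree_C, zero_add])
  refine (totalDegree_add _ _).trans (max_le ((totalDegree_add _ _).trans (max_le ?_ ?_)) ?_)
  · exact totalDegree_finsetSum_le fun ℓ _ => hscale _ (hgd ℓ)
  · exact totalDegree_finsetSum_le fun j _ => hscale _ (hhd j)
  · rw [totalDegree_C]
    exact d.zero_le

theorem isSOSDeg_dualCertificate (hgd : ∀ ℓ, (g ℓ).totalDegree ≤ d)
    (hhd : ∀ j, (h j).totalDegree ≤ d)
    (hlagrangian : IsSOSConvex (pieceLagrangian g h lam last δ))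
    (hnonneg : ∀ v, 0 ≤ eval v (dualCertificate F0 F g h lam last Z δ)) :
    IsSOSDeg d (dualCertificate F0 F g h lam last Z δ) := by
  refine ⟨(isSOSConvex_dualCertificate hlagrangian).isSOS_of_nonneg hnonneg,
    totalDegree_sub_sum_C_mul_X_le ((totalDegree_sub _ _).trans (max_le ?_ ?_)) hnonneg⟩
  · exact totalDegree_pieceLagrangian_le hgd hhd
  · rw [totalDegree_C]
    exact d.zero_le

theorem exists_isSOSDeg_dualCertificate (hF0 : F0.IsSymm) (hF : ∀ i, (F i).IsSymm)
    (hM : ∀ t, (M t).IsSymm) (hslater : ∃ v ξ, (pencil F0 F M (v, ξ)).PosDef)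
    (hg : ∀ ℓ, IsSOSConvex (g ℓ)) (hh : ∀ j, IsSOSConvex (h j))
    (hgd : ∀ ℓ, (g ℓ).totalDegree ≤ d) (hhd : ∀ j, (h j).totalDegree ≤ d)
    (hlam : ∀ j, 0 ≤ lam j)
    (hpiece : ∀ v ∈ projSpec F0 F M, ∃ ℓ, 0 ≤ eval v (g ℓ) + ∑ j, lam j * eval v (h j) + last) :
    ∃ (Z : Matrix (Fin ν) (Fin ν) ℝ) (δ : ι → ℝ), Z.PosSemidef ∧ (∀ ℓ, 0 ≤ δ ℓ) ∧
      ∑ ℓ, δ ℓ = 1 ∧ IsSOSDeg d (dualCertificate F0 F g h lam last Z δ) ∧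
      ∀ t, (Z * M t).trace = 0 := by
  classical
  have hconv : ∀ ℓ, ConvexOn ℝ Set.univ fun v =>
      eval v (g ℓ) + ∑ j, lam j * eval v (h j) + last := fun ℓ => by
    have hvertex := isSOSConvex_pieceLagrangian (last := last) hg hh hlam
      (Pi.single_nonneg.2 zero_le_one : (0 : ι → ℝ) ≤ Pi.single ℓ 1)
    simpa [eval_pieceLagrangian, Pi.single_apply] using hvertex.convexOn
  obtain ⟨δ, Z, hδ, hδ1, hZ, hZM, hle⟩ :=
    exists_lmi_multipliers hF0 hF hM hslater hconv hpiece
  refine ⟨Z, δ, hZ, hδ, hδ1, isSOSDeg_dualCertificate hgd hhd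
    (isSOSConvex_pieceLagrangian hg hh hlam hδ) fun v => ?_, hZM⟩
  rw [eval_dualCertificate, eval_pieceLagrangian, sub_nonneg]
  have hweights : ∑ ℓ, δ ℓ * (eval v (g ℓ) + ∑ j, lam j * eval v (h j) + last) =
      ∑ ℓ, δ ℓ * eval v (g ℓ) + ∑ j, lam j * eval v (h j) + last := by
    simp only [mul_add, Finset.sum_add_distrib, ← Finset.sum_mul, hδ1, one_mul]
  exact hweights ▸ hle v

theorem nonneg_of_isSOS_dualCertificate (hZ : Z.PosSemidef) (hδ : ∀ ℓ, 0 ≤ δ ℓ)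
    (hδ1 : ∑ ℓ, δ ℓ = 1) (hsos : IsSOS (dualCertificate F0 F g h lam last Z δ))
    (hZM : ∀ t, (Z * M t).trace = 0) {v : Fin m → ℝ} (hv : v ∈ projSpec F0 F M) {b : ℝ}
    (hb : ∀ ℓ, eval v (g ℓ) ≤ b) : 0 ≤ b + ∑ j, lam j * eval v (h j) + last := by
  have hcert := hsos.eval_nonneg v
  rw [eval_dualCertificate, eval_pieceLagrangian] at hcert
  have havg : ∑ ℓ, δ ℓ * eval v (g ℓ) ≤ b := by
    calc ∑ ℓ, δ ℓ * eval v (g ℓ) ≤ ∑ ℓ, δ ℓ * b :=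
          Finset.sum_le_sum fun ℓ _ => mul_le_mul_of_nonneg_left (hb ℓ) (hδ ℓ)
      _ = b := by rw [← Finset.sum_mul, hδ1, one_mul]
  linarith [trace_nonneg_of_mem_projSpec hZ hZM hv]

end SOSProgram

section PiecewiseMinMax

variable {m N ν L r J : ℕ} [NeZero L] [NeZero r]

theorem continuous_pwMinMax (g : Fin r → Fin L → MvPolynomial (Fin m) ℝ) :
    Continuous (pwMinMax g) :=
  Continuous.finset_inf'_apply _ fun _ _ =>
    Continuous.finset_sup'_apply _ fun _ _ => MvPolynomial.continuous_eval _

theorem exists_pwMinMax_le (g : Fin r → Fin L → MvPolynomial (Fin m) ℝ) (k : Fin r)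
    (v : Fin m → ℝ) : ∃ ℓ, pwMinMax g v ≤ eval v (g k ℓ) := by
  obtain ⟨ℓ, -, hℓ⟩ := Finset.exists_mem_eq_sup' (Finset.univ_nonempty (α := Fin L))
    fun ℓ => eval v (g k ℓ)
  exact ⟨ℓ, hℓ ▸ Finset.inf'_le _ (Finset.mem_univ k)⟩

theorem exists_forall_eval_le_pwMinMax (g : Fin r → Fin L → MvPolynomial (Fin m) ℝ)
    (v : Fin m → ℝ) : ∃ k, ∀ ℓ, eval v (g k ℓ) ≤ pwMinMax g v := by
  obtain ⟨k, -, hk⟩ := Finset.exists_mem_eq_inf' (Finset.univ_nonempty (α := Fin r)) fun k =>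
    Finset.univ.sup' Finset.univ_nonempty fun ℓ => eval v (g k ℓ)
  exact ⟨k, fun ℓ => (Finset.le_sup' (fun ℓ => eval v (g k ℓ)) (Finset.mem_univ ℓ)).trans_eq
    hk.symm⟩

theorem momentProblem_eq_sosProgram_general {F0 : Matrix (Fin ν) (Fin ν) ℝ}
    {F : Fin m → Matrix (Fin ν) (Fin ν) ℝ} {M : Fin N → Matrix (Fin ν) (Fin ν) ℝ}
    (hF0 : F0.IsSymm) (hF : ∀ i, (F i).IsSymm) (hM : ∀ t, (M t).IsSymm)
    {g : Fin r → Fin L → MvPolynomial (Fin m) ℝ} {h : Fin J → MvPolynomial (Fin m) ℝ}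
    {γ : Fin J → ℝ} (hg : ∀ k ℓ, IsSOSConvex (g k ℓ)) (hh : ∀ j, IsSOSConvex (h j)) {d : ℕ}
    (hgd : ∀ k ℓ, (g k ℓ).totalDegree ≤ d) (hhd : ∀ j, (h j).totalDegree ≤ d)
    (hcompact : IsCompact (projSpec F0 F M))
    (hslater : ∃ v ξ, (pencil F0 F M (v, ξ)).PosDef)
    (hint : (γ, 1) ∈ interior (momentRange (projSpec F0 F M) fun j x => eval x (h j))) {p : ℝ}
    (hinf : IsGLB (momentValues (projSpec F0 F M) (pwMinMax g) (fun j x => eval x (h j)) γ) p) :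
    IsGreatest (sosValues F0 F M g h γ d) p := by
  have hφ : ContinuousOn (pwMinMax g) (projSpec F0 F M) := (continuous_pwMinMax g).continuousOn
  have hη : ∀ j, ContinuousOn (fun x => eval x (h j)) (projSpec F0 F M) := fun j =>
    (MvPolynomial.continuous_eval (h j)).continuousOn
  constructor
  · obtain ⟨lam, last, hlam, hnonneg, hp⟩ :=
      exists_multipliers_of_isGLB_momentValues hcompact hφ hη hint hinf
    have hpiece : ∀ k, ∀ v ∈ projSpec F0 F M,
        ∃ ℓ, 0 ≤ eval v (g k ℓ) + ∑ j, lam j * eval v (h j) + last := fun k v hv =>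
      (exists_pwMinMax_le g k v).imp fun ℓ hℓ => by linarith [hnonneg v hv]
    choose Z δ hZ hδ hδ1 hsos hZM using fun k => exists_isSOSDeg_dualCertificate
      hF0 hF hM hslater (hg k) hh (hgd k) hhd hlam (hpiece k)
    exact ⟨lam, last, Z, δ, hlam, hZ, hδ, hδ1, hsos, hZM, hp⟩
  · rintro _ ⟨lam, last, Z, δ, hlam, hZ, hδ, hδ1, hsos, hZM, rfl⟩
    refine hinf.2 fun val hval => neg_sum_sub_le_of_mem_momentValues hcompact hφ hη hlam
      (fun v hv => ?_) hval
    obtain ⟨k, hk⟩ := exists_forall_eval_le_pwMinMax g v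
    exact nonneg_of_isSOS_dualCertificate (hZ k) (hδ k) (hδ1 k) (hsos k).1 (hZM k) hv hk

end PiecewiseMinMax

/-- Exact SOS reformulation for piecewise SOS-convex moment
optimization: under the interior point condition and compactness/strict
feasibility assumptions, `min (P) = max (D)`. -/
theorem momentProblem_eq_sosProgram
    {m N ν L r J : ℕ} [NeZero L] [NeZero r]
    (F0 : Matrix (Fin ν) (Fin ν) ℝ) (F : Fin m → Matrix (Fin ν) (Fin ν) ℝ)
    (M : Fin N → Matrix (Fin ν) (Fin ν) ℝ)
    (hF0 : F0.IsSymm) (hF : ∀ i, (F i).IsSymm) (hM : ∀ t, (M t).IsSymm)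
    (g : Fin r → Fin L → MvPolynomial (Fin m) ℝ)
    (h : Fin J → MvPolynomial (Fin m) ℝ) (γ : Fin J → ℝ)
    (hg : ∀ k ℓ, IsSOSConvex (g k ℓ)) (hh : ∀ j, IsSOSConvex (h j))
    (d : ℕ) (hdeven : Even d)
    (hdge : (∀ k ℓ, (g k ℓ).totalDegree ≤ d) ∧ (∀ j, (h j).totalDegree ≤ d))
    (hdmin : ∀ d', Even d' →
      ((∀ k ℓ, (g k ℓ).totalDegree ≤ d') ∧ (∀ j, (h j).totalDegree ≤ d')) → d ≤ d')
    (hcompact : IsCompact (projSpec F0 F M))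
    (hslater : ∃ (vbar : Fin m → ℝ) (ξbar : Fin N → ℝ),
      (F0 + ∑ i, vbar i • F i + ∑ t, ξbar t • M t).PosDef)
    (hint : ((fun j => γ j, (1 : ℝ)) : (Fin J → ℝ) × ℝ) ∈ interior
      {q : (Fin J → ℝ) × ℝ | ∃ (μ : Measure (Fin m → ℝ)) (s : Fin J → ℝ),
        IsFiniteMeasure μ ∧ μ (projSpec F0 F M)ᶜ = 0 ∧ (∀ j, 0 ≤ s j) ∧
        (∀ j, q.1 j = (∫ x, eval x (h j) ∂μ) + s j) ∧
        q.2 = (μ Set.univ).toReal})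
    (p : ℝ)
    (hmin : IsLeast
      {val : ℝ | ∃ μ : Measure (Fin m → ℝ), IsFiniteMeasure μ ∧
        μ (projSpec F0 F M)ᶜ = 0 ∧ μ Set.univ = 1 ∧
        (∀ j, (∫ x, eval x (h j) ∂μ) ≤ γ j) ∧
        val = ∫ x, pwMinMax g x ∂μ} p) :
    IsGreatest
      {val : ℝ | ∃ (lam : Fin J → ℝ) (lamlast : ℝ)
        (Z : Fin r → Matrix (Fin ν) (Fin ν) ℝ) (δ : Fin r → Fin L → ℝ),
        (∀ j, 0 ≤ lam j) ∧ (∀ k, (Z k).PosSemidef) ∧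
        (∀ k ℓ, 0 ≤ δ k ℓ) ∧ (∀ k, ∑ ℓ, δ k ℓ = 1) ∧
        (∀ k, IsSOSDeg d (∑ ℓ, C (δ k ℓ) * g k ℓ + ∑ j, C (lam j) * h j
          + C lamlast - C ((Z k * F0).trace)
          - ∑ i, C ((Z k * F i).trace) * X i)) ∧
        (∀ k t, (Z k * M t).trace = 0) ∧
        val = -∑ j, lam j * γ j - lamlast} p :=
  momentProblem_eq_sosProgram_general hF0 hF hM hg hh hdge.1 hdge.2 hcompact
    (by simpa only [pencil_apply] using hslater) hint hmin.isGLB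

end
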